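/- (Counterexample showing no algorithm can be Bayes consistent for the Wen et al. model with stochastic labels.) Let Y = {1,2}. Define Q ∈ Δ(Y) by Q(1) = 2/3, Q(2) = 1/3 and the kernel M by the product form M(y)(s) = (∏_{k ∈ s} q(y,k))·(∏_{j ∉ s}(1 − q(y,j))) with q(1,1) = 1, q(1,2) = 2/3, q(2,2) = 1, q(2,1) = 0. Define Q̂ ∈ Δ(Y) by Q̂(1) = 1/3, Q̂(2) = 2/3 and M̂ by the same product form with q̂(1,1) = 1, q̂(1,2) = 1/3, q̂(2,2) = 1, q̂(2,1) = 1/2. Then both pairs induce the same bag distribution, namely P({1}) = 2/9, P({2}) = 3/9, P({1,2}) = 4/9 (and 0 on the empty bag), while argmax Q = {1} and argmax Q̂ = {2}, which are different. -/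

import Mathlib

/-- A probability vector on a finite type `T`. -/
def IsProbVec {T : Type*} [Fintype T] (Q : T → ℝ) : Prop :=
  (∀ t, 0 ≤ Q t) ∧ ∑ t, Q t = 1

/-- The argmax set of a real-valued function on labels. -/
def argmaxSet {Y : Type*} (Q : Y → ℝ) : Set Y := {y | ∀ y', Q y' ≤ Q y}

/-- The independent-inclusion bag generation model of Wen et al. -/
def Mwen {Y : Type*} [Fintype Y] [DecidableEq Y] (q : Y → Y → ℝ) :
    Y → Finset Y → ℝ :=
  fun y s => (∏ k ∈ s, q y k) * ∏ l ∈ sᶜ, (1 - q y l)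

/- Labels `1, 2` of the paper are encoded as `0, 1 : Fin 2`. -/

/-- The label distribution `Q(1) = 2/3, Q(2) = 1/3`. -/
noncomputable def Qa : Fin 2 → ℝ := ![2/3, 1/3]

/-- The label distribution `Q̂(1) = 1/3, Q̂(2) = 2/3`. -/
noncomputable def Qb : Fin 2 → ℝ := ![1/3, 2/3]

/-- Inclusion probabilities `q(1,1)=1, q(1,2)=2/3, q(2,1)=0, q(2,2)=1`. -/
noncomputable def qa : Fin 2 → Fin 2 → ℝ := ![![1, 2/3], ![0, 1]]

/-- Inclusion probabilities `q̂(1,1)=1, q̂(1,2)=1/3, q̂(2,1)=1/2, q̂(2,2)=1`. -/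
noncomputable def qb : Fin 2 → Fin 2 → ℝ := ![![1, 1/3], ![1/2, 1]]

/-!
When the true label always lies in the bag, on two labels the bag `{y}` can only arise from the
true label `y`, so its probability is `Q y * (1 - q y z)`, where `z` is the other label; the empty
bag has probability `0` and the bag of both labels carries the remaining mass. Only these two
products are thus visible in the bag distribution, and a smaller `Q y` can be compensated by a
smaller inclusion probability `q y z`. Here `2/3 * 1/3 = 1/3 * 2/3` and `1/3 * 1 = 2/3 * 1/2`.
-/

theorem isProbVec_fin_two_iff {Q : Fin 2 → ℝ} :
    IsProbVec Q ↔ (0 ≤ Q 0 ∧ 0 ≤ Q 1) ∧ Q 0 + Q 1 = 1 := by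
  rw [IsProbVec, Fin.forall_fin_two, Fin.sum_univ_two]

theorem argmaxSet_eq_singleton {Y : Type*} {Q : Y → ℝ} {y : Y} (h : ∀ z ≠ y, Q z < Q y) :
    argmaxSet Q = {y} := by
  refine Set.eq_singleton_iff_unique_mem.2 ⟨fun z => ?_, fun z hz => ?_⟩
  · obtain rfl | hzy := eq_or_ne z y
    · exact le_rfl
    · exact (h z hzy).le
  · by_contra hzy
    exact (h z hzy).not_ge (hz y)

/-- The distribution on `S` induced by a kernel `M` and a label distribution `Q`. Bag distributions
are the case `S = Finset Y`. -/
def bagDist {Y S : Type*} [Fintype Y] (Q : Y → ℝ) (M : Y → S → ℝ) (s : S) : ℝ :=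
  ∑ y, Q y * M y s

section IndependentInclusion

variable {Y : Type*} [Fintype Y] [DecidableEq Y] {q : Y → Y → ℝ}

theorem sum_Mwen (q : Y → Y → ℝ) (y : Y) : ∑ s, Mwen q y s = 1 :=
  calc ∑ s, Mwen q y s = ∏ k, (q y k + (1 - q y k)) := (Fintype.prod_add _ _).symm
    _ = 1 := by simp only [add_sub_cancel, Finset.prod_const_one]

theorem isProbVec_Mwen {y : Y} (hq : ∀ k, q y k ∈ Set.Icc 0 1) : IsProbVec (Mwen q y) where
  left _ := mul_nonneg (Finset.prod_nonneg fun k _ => (hq k).1)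
    (Finset.prod_nonneg fun k _ => sub_nonneg.2 (hq k).2)
  right := sum_Mwen q y

theorem Mwen_eq_zero_of_notMem {y : Y} {s : Finset Y} (hq : q y y = 1) (hs : y ∉ s) :
    Mwen q y s = 0 :=
  mul_eq_zero_of_right _ <|
    Finset.prod_eq_zero (Finset.mem_compl.2 hs) (sub_eq_zero.2 hq.symm)

theorem bagDist_Mwen_empty (Q : Y → ℝ) (hq : ∀ y, q y y = 1) : bagDist Q (Mwen q) ∅ = 0 :=
  Finset.sum_eq_zero fun y _ =>
    mul_eq_zero_of_right _ (Mwen_eq_zero_of_notMem (hq y) (Finset.notMem_empty y))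

theorem bagDist_Mwen_singleton (Q : Y → ℝ) (hq : ∀ y, q y y = 1) (y : Y) :
    bagDist Q (Mwen q) {y} = Q y * ∏ k ∈ {y}ᶜ, (1 - q y k) :=
  calc bagDist Q (Mwen q) {y} = Q y * Mwen q y {y} :=
        Fintype.sum_eq_single y fun z hz => mul_eq_zero_of_right _ <|
          Mwen_eq_zero_of_notMem (hq z) (Finset.notMem_singleton.2 hz)
    _ = Q y * ∏ k ∈ {y}ᶜ, (1 - q y k) := by rw [Mwen, Finset.prod_singleton, hq, one_mul]

theorem bagDist_Mwen_univ (Q : Y → ℝ) (q : Y → Y → ℝ) :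
    bagDist Q (Mwen q) Finset.univ = ∑ y, Q y * ∏ k, q y k := by
  simp only [bagDist, Mwen, Finset.compl_univ, Finset.prod_empty, mul_one]

end IndependentInclusion

section TwoLabels

variable {q : Fin 2 → Fin 2 → ℝ}

theorem bagDist_Mwen_singleton_fin_two (Q : Fin 2 → ℝ) (hq : ∀ y, q y y = 1) {y z : Fin 2}
    (hyz : y ≠ z) : bagDist Q (Mwen q) {y} = Q y * (1 - q y z) := by
  have hcompl : ({y}ᶜ : Finset (Fin 2)) = {z} := by decide +revert
  rw [bagDist_Mwen_singleton Q hq, hcompl, Finset.prod_singleton]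

theorem bagDist_Mwen_pair_fin_two (Q : Fin 2 → ℝ) (hq : ∀ y, q y y = 1) :
    bagDist Q (Mwen q) {0, 1} = Q 0 * q 0 1 + Q 1 * q 1 0 := by
  have huniv : ({0, 1} : Finset (Fin 2)) = Finset.univ := by decide
  simp only [huniv, bagDist_Mwen_univ, Fin.sum_univ_two, Fin.prod_univ_two, hq, one_mul, mul_one]

theorem bagDist_Mwen_eq_of_fin_two {Q Q' : Fin 2 → ℝ} {q' : Fin 2 → Fin 2 → ℝ}
    (hq : ∀ y, q y y = 1) (hq' : ∀ y, q' y y = 1)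
    (hsum : Q 0 + Q 1 = Q' 0 + Q' 1) (h₀ : Q 0 * (1 - q 0 1) = Q' 0 * (1 - q' 0 1))
    (h₁ : Q 1 * (1 - q 1 0) = Q' 1 * (1 - q' 1 0)) :
    bagDist Q (Mwen q) = bagDist Q' (Mwen q') := by
  funext s
  have hs : s = ∅ ∨ s = {0} ∨ s = {1} ∨ s = {0, 1} := by decide +revert
  obtain rfl | rfl | rfl | rfl := hs
  · rw [bagDist_Mwen_empty Q hq, bagDist_Mwen_empty Q' hq']
  · simpa only [bagDist_Mwen_singleton_fin_two _ hq zero_ne_one,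
      bagDist_Mwen_singleton_fin_two _ hq' zero_ne_one] using h₀
  · simpa only [bagDist_Mwen_singleton_fin_two _ hq one_ne_zero,
      bagDist_Mwen_singleton_fin_two _ hq' one_ne_zero] using h₁
  · rw [bagDist_Mwen_pair_fin_two Q hq, bagDist_Mwen_pair_fin_two Q' hq']
    linear_combination hsum - h₀ - h₁

end TwoLabels

theorem isProbVec_Qa : IsProbVec Qa := by
  norm_num [isProbVec_fin_two_iff, Qa]

theorem isProbVec_Qb : IsProbVec Qb := by
  norm_num [isProbVec_fin_two_iff, Qb]

theorem qa_self : ∀ y, qa y y = 1 :=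
  Fin.forall_fin_two.2 ⟨rfl, rfl⟩

theorem qb_self : ∀ y, qb y y = 1 :=
  Fin.forall_fin_two.2 ⟨rfl, rfl⟩

theorem qa_mem_Icc : ∀ y k, qa y k ∈ Set.Icc 0 1 := by
  norm_num [Fin.forall_fin_two, qa]

theorem qb_mem_Icc : ∀ y k, qb y k ∈ Set.Icc 0 1 := by
  norm_num [Fin.forall_fin_two, qb]

theorem bagDist_Qa_eq_bagDist_Qb : bagDist Qa (Mwen qa) = bagDist Qb (Mwen qb) := by
  apply bagDist_Mwen_eq_of_fin_two qa_self qb_self <;> norm_num [Qa, Qb, qa, qb]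

theorem argmaxSet_Qa : argmaxSet Qa = {0} :=
  argmaxSet_eq_singleton <| by norm_num [Fin.forall_fin_two, Qa]

theorem argmaxSet_Qb : argmaxSet Qb = {1} :=
  argmaxSet_eq_singleton <| by norm_num [Fin.forall_fin_two, Qb]

/-- Counterexample showing that no algorithm can be Bayes consistent for the
Wen et al. model with stochastic labels: the two scenarios `(Qa, Mwen qa)` and
`(Qb, Mwen qb)` induce exactly the same bag distribution
(`P({1}) = 2/9, P({2}) = 3/9, P({1,2}) = 4/9`, `P(∅) = 0`), yet
`argmax Qa = {1} ≠ {2} = argmax Qb`. -/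
theorem wen_stochastic_counterexample :
    IsProbVec Qa ∧ IsProbVec Qb ∧
    (∀ y : Fin 2, IsProbVec (Mwen qa y)) ∧
    (∀ y : Fin 2, IsProbVec (Mwen qb y)) ∧
    (∀ s : Finset (Fin 2),
      ∑ y, Qa y * Mwen qa y s = ∑ y, Qb y * Mwen qb y s) ∧
    (∑ y, Qa y * Mwen qa y ({0} : Finset (Fin 2)) = 2/9) ∧
    (∑ y, Qa y * Mwen qa y ({1} : Finset (Fin 2)) = 3/9) ∧
    (∑ y, Qa y * Mwen qa y ({0, 1} : Finset (Fin 2)) = 4/9) ∧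
    (∑ y, Qa y * Mwen qa y (∅ : Finset (Fin 2)) = 0) ∧
    argmaxSet Qa = {0} ∧ argmaxSet Qb = {1} ∧
    argmaxSet Qa ≠ argmaxSet Qb := by
  refine ⟨isProbVec_Qa, isProbVec_Qb, fun y => isProbVec_Mwen (qa_mem_Icc y),
    fun y => isProbVec_Mwen (qb_mem_Icc y), congrFun bagDist_Qa_eq_bagDist_Qb,
    (bagDist_Mwen_singleton_fin_two Qa qa_self zero_ne_one).trans ?_,
    (bagDist_Mwen_singleton_fin_two Qa qa_self one_ne_zero).trans ?_,
    (bagDist_Mwen_pair_fin_two Qa qa_self).trans ?_,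
    bagDist_Mwen_empty Qa qa_self, argmaxSet_Qa, argmaxSet_Qb, ?argmax_ne⟩
  case argmax_ne =>
    rw [argmaxSet_Qa, argmaxSet_Qb]
    exact Set.singleton_injective.ne zero_ne_one
  all_goals norm_num [Qa, qa]
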